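/- Let W be a classical–quantum channel from a finite alphabet X with |X| = a into the density operators on ℂ^d. For every x^n ∈ X^n of type P, every δ > 0 and every η > 0: every η-shadow B of W_{x^n} satisfies Tr B ≥ (η − ad/δ²)·exp₂(nH(W|P) − K·d·√a·δ·√n), where K = 2 log₂(e)/e and H(W|P) = Σ_x P(x)H(W_x). -/

import Mathlib

open Matrix BigOperators Finset
open scoped Classical ComplexOrder

noncomputable section

/-- Square complex matrices of size `d` (operators on `ℂ^d`). -/
abbrev Mat (d : ℕ) := Matrix (Fin d) (Fin d) ℂ

/-- Operators on the `n`-fold tensor power `(ℂ^d)^{⊗n}`, indexed by `Fin n → Fin d`. -/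
abbrev MatPow (d n : ℕ) := Matrix (Fin n → Fin d) (Fin n → Fin d) ℂ

/-- Tensor product `A 0 ⊗ A 1 ⊗ ⋯ ⊗ A (n-1)` of a family of `d × d` matrices. -/
def tensorPow {d n : ℕ} (A : Fin n → Mat d) : MatPow d n :=
  Matrix.of fun j k => ∏ i, A i (j i) (k i)

/-- Exponential to base 2. -/
def exp2 (t : ℝ) : ℝ := (2 : ℝ) ^ t

/-- `P` is a probability distribution on the finite set `X`. -/
def IsProbDist {X : Type*} [Fintype X] (P : X → ℝ) : Prop :=
  (∀ x, 0 ≤ P x) ∧ ∑ x, P x = 1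

/-- `ρ` is a density operator (a state): positive semidefinite with trace one. -/
def IsState {ι : Type*} [Fintype ι] [DecidableEq ι] (ρ : Matrix ι ι ℂ) : Prop :=
  ρ.PosSemidef ∧ ρ.trace = 1

/-- `N(x|x^n)`: number of occurrences of the letter `x` in the sequence `xs`. -/
def countIn {X : Type*} {n : ℕ} (x : X) (xs : Fin n → X) : ℕ :=
  (Finset.univ.filter fun i => xs i = x).card

/-- The variance-typical set `T^n_{P,δ}`. -/
def typicalSet {X : Type*} [Fintype X] (n : ℕ) (P : X → ℝ) (δ : ℝ) :
    Finset (Fin n → X) :=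
  Finset.univ.filter fun xs => ∀ x : X,
    |(countIn x xs : ℝ) - n * P x| ≤ δ * Real.sqrt n * Real.sqrt (P x * (1 - P x))

/-- Product (i.i.d.) probability `P^{⊗n}(A)` of a set `A` of sequences. -/
def prodProb {X : Type*} [Fintype X] {n : ℕ} (P : X → ℝ) (A : Finset (Fin n → X)) : ℝ :=
  ∑ xs ∈ A, ∏ i, P (xs i)

/-- Shannon entropy to base 2. -/
def shannonEntropy {X : Type*} [Fintype X] (P : X → ℝ) : ℝ :=
  -∑ x, P x * Real.logb 2 (P x)

/-- von Neumann entropy to base 2, `H(ρ) = -Tr(ρ log₂ ρ)`, via the eigenvalues. -/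
def vnEntropy {d : ℕ} (ρ : Mat d) : ℝ :=
  if h : ρ.IsHermitian then -∑ i, h.eigenvalues i * Real.logb 2 (h.eigenvalues i) else 0

/-- The constant `K = 2 log₂(e) / e`. -/
def Kconst : ℝ := 2 * Real.logb 2 (Real.exp 1) / Real.exp 1

/-- A diagonalization `ρ = Σ_j R j • π j` into one-dimensional mutually orthogonal
eigenprojectors, with eigenvalue list `R` a probability distribution. -/
def IsDiagonalization {d : ℕ} (ρ : Mat d) (R : Fin d → ℝ) (π : Fin d → Mat d) : Prop :=
  (∀ j, (π j).PosSemidef) ∧ (∀ j, π j * π j = π j) ∧ (∀ j, (π j).trace = 1) ∧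
    (∀ j k, j ≠ k → π j * π k = 0) ∧ (∑ j, π j = 1) ∧
    ρ = ∑ j, (R j : ℂ) • π j ∧ IsProbDist R

/-- The variance-typical projector `Π^n_{ρ,δ}` of a state with fixed diagonalization
`(R, π)`. -/
def typicalProj {d : ℕ} (n : ℕ) (R : Fin d → ℝ) (π : Fin d → Mat d) (δ : ℝ) : MatPow d n :=
  ∑ js ∈ typicalSet n R δ, tensorPow fun i => π (js i)

/-- `B` is an `η`-shadow of the state `σ`: `0 ≤ B ≤ 1` and `Tr(σB) ≥ η`. -/
def IsShadow {ι : Type*} [Fintype ι] [DecidableEq ι] (σ B : Matrix ι ι ℂ) (η : ℝ) : Prop :=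
  B.PosSemidef ∧ ((1 : Matrix ι ι ℂ) - B).PosSemidef ∧ η ≤ (Matrix.trace (σ * B)).re

/-- Average state `PW = Σ_x P(x) W_x` of a cq-channel under input distribution `P`. -/
def avgState {X : Type*} [Fintype X] {d : ℕ} (P : X → ℝ) (W : X → Mat d) : Mat d :=
  ∑ x, (P x : ℂ) • W x

/-- Conditional von Neumann entropy `H(W|P) = Σ_x P(x) H(W_x)`. -/
def condEntropy {X : Type*} [Fintype X] {d : ℕ} (P : X → ℝ) (W : X → Mat d) : ℝ :=
  ∑ x, P x * vnEntropy (W x)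

/-- Mutual information `I(P;W) = H(PW) − H(W|P)`. -/
def mutualInfo {X : Type*} [Fintype X] {d : ℕ} (P : X → ℝ) (W : X → Mat d) : ℝ :=
  vnEntropy (avgState P W) - condEntropy P W

/-- Capacity `C(W) = max_P I(P;W)`. -/
def capacity {X : Type*} [Fintype X] {d : ℕ} (W : X → Mat d) : ℝ :=
  sSup {c | ∃ P : X → ℝ, IsProbDist P ∧ c = mutualInfo P W}

/-- `(f, D)` (with message set `M` inside the outcome index set `M'`) is an
`(n,λ)`-code for the cq-channel `W`: the `D m` are positive semidefinite, sum to the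
identity, and each message is decoded correctly with probability at least `1 - λ`. -/
def IsCode {X : Type*} [Fintype X] {d n : ℕ} (W : X → Mat d) (lam : ℝ)
    {M' : Type*} [Fintype M'] (M : Finset M') (f : M' → Fin n → X)
    (D : M' → MatPow d n) : Prop :=
  (∀ m, (D m).PosSemidef) ∧ (∑ m, D m = 1) ∧
    ∀ m ∈ M, 1 - lam ≤ (Matrix.trace (tensorPow (fun i => W (f m i)) * D m)).re

/-- `N(n,λ)`: maximal size of an `(n,λ)`-code for `W`. -/
def maxCodeSize {X : Type*} [Fintype X] (d : ℕ) (W : X → Mat d) (n : ℕ) (lam : ℝ) : ℕ :=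
  sSup {k | ∃ (M' : Type) (_ : Fintype M') (M : Finset M') (f : M' → Fin n → X)
    (D : M' → MatPow d n), IsCode W lam M f D ∧ M.card = k}

/-- Trace norm `‖A‖₁ = Tr|A|`: the sum of the singular values. -/
def traceNorm {ι : Type*} [Fintype ι] [DecidableEq ι] (A : Matrix ι ι ℂ) : ℝ :=
  ∑ i, Real.sqrt ((Matrix.posSemidef_conjTranspose_mul_self A).1.eigenvalues i)

/-- Trace distance `D(ρ,σ) = ½‖ρ−σ‖₁`. -/
def traceDist {ι : Type*} [Fintype ι] [DecidableEq ι] (ρ σ : Matrix ι ι ℂ) : ℝ :=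
  traceNorm (ρ - σ) / 2

/-- (Pure-state) fidelity `F(ρ,σ) = Tr(ρσ)`. -/
def fidelity {ι : Type*} [Fintype ι] [DecidableEq ι] (ρ σ : Matrix ι ι ℂ) : ℝ :=
  (Matrix.trace (ρ * σ)).re

/-- A pure state: the rank-one orthogonal projector `|ψ⟩⟨ψ|` onto the span of a
unit vector `ψ`. -/
def IsPureState {ι : Type*} [Fintype ι] (ρ : Matrix ι ι ℂ) : Prop :=
  ∃ ψ : ι → ℂ, (∑ i, star (ψ i) * ψ i) = 1 ∧ ρ = Matrix.vecMulVec ψ (star ψ)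

/-- The set of eigenvalue-index sequences `js` that are variance-typical, with
constant `δ`, for the distribution `q x` on each block `I_x = {i : xs i = x}`. -/
def condTypicalSet {X : Type*} [Fintype X] {n d : ℕ} (xs : Fin n → X)
    (q : X → Fin d → ℝ) (δ : ℝ) : Finset (Fin n → Fin d) :=
  Finset.univ.filter fun js => ∀ (x : X) (k : Fin d),
    |((Finset.univ.filter fun i => xs i = x ∧ js i = k).card : ℝ) - (countIn x xs : ℝ) * q x k|
      ≤ δ * Real.sqrt (countIn x xs) * Real.sqrt (q x k * (1 - q x k))

/-- Conditional variance-typical projector `Π^n_{W,δ}(x^n) = ⊗_{x∈X} Π^{I_x}_{W_x,δ}`,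
with respect to fixed diagonalizations `W_x = Σ_j (q x j) • (π x j)`. -/
def condTypicalProj {X : Type*} [Fintype X] {d : ℕ} {n : ℕ} (xs : Fin n → X)
    (q : X → Fin d → ℝ) (π : X → Fin d → Mat d) (δ : ℝ) : MatPow d n :=
  ∑ js ∈ condTypicalSet xs q δ, tensorPow fun i => π (xs i) (js i)

/-! In an eigenbasis of a product state, the diagonal entries of a shadow form a test with values
in `[0, 1]` for the product of the spectral distributions. The surprisal `-log₂ μ{ω}` of that
product has mean equal to the entropy `H` of the state. Since `q (log₂ q)² ≤ K²` on `[0, 1]`, each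
factor contributes at most `dK²` to its variance, so by Chebyshev's inequality the surprisal is
within `t` of `H` outside a set of probability `ndK²/t²`. Every remaining outcome has probability at
most `2^(t - H)`, so a test passing with probability `η` must have total mass at least
`(η - ndK²/t²) 2^(H - t)`. -/

open MeasureTheory ProbabilityTheory

section Tensor

variable {d n : ℕ}

theorem tensorPow_mul (A C : Fin n → Mat d) :
    tensorPow A * tensorPow C = tensorPow fun i => A i * C i := by
  ext j k
  simp only [tensorPow, Matrix.mul_apply, Matrix.of_apply, Fintype.prod_sum,
    Finset.prod_mul_distrib]

theorem star_tensorPow (A : Fin n → Mat d) :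
    star (tensorPow A) = tensorPow fun i => star (A i) := by
  ext j k
  simp [tensorPow, Matrix.star_apply]

theorem tensorPow_diagonal (v : Fin n → Fin d → ℂ) :
    tensorPow (fun i => Matrix.diagonal (v i)) =
      Matrix.diagonal fun j : Fin n → Fin d => ∏ i, v i (j i) := by
  ext j k
  rcases eq_or_ne j k with rfl | hjk
  · simp [tensorPow]
  · obtain ⟨i, hi⟩ := Function.ne_iff.mp hjk
    rw [Matrix.diagonal_apply_ne _ hjk]
    exact Finset.prod_eq_zero (Finset.mem_univ i) (Matrix.diagonal_apply_ne _ hi)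

theorem tensorPow_one : tensorPow (fun _ : Fin n => (1 : Mat d)) = 1 := by
  simpa using tensorPow_diagonal fun (_ : Fin n) (_ : Fin d) => (1 : ℂ)

theorem tensorPow_mem_unitaryGroup {U : Fin n → Mat d}
    (hU : ∀ i, U i ∈ Matrix.unitaryGroup (Fin d) ℂ) :
    tensorPow U ∈ Matrix.unitaryGroup (Fin n → Fin d) ℂ := by
  simp_rw [Matrix.mem_unitaryGroup_iff] at hU ⊢
  simp_rw [star_tensorPow, tensorPow_mul, hU, tensorPow_one]

theorem tensorPow_eq_conj_diagonal {ρ : Fin n → Mat d} (hρ : ∀ i, (ρ i).IsHermitian) :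
    tensorPow ρ =
      tensorPow (fun i => ((hρ i).eigenvectorUnitary : Mat d)) *
        Matrix.diagonal (fun j : Fin n → Fin d => ∏ i, ((hρ i).eigenvalues (j i) : ℂ)) *
        star (tensorPow fun i => ((hρ i).eigenvectorUnitary : Mat d)) := by
  rw [← tensorPow_diagonal fun i k => ((hρ i).eigenvalues k : ℂ), star_tensorPow, tensorPow_mul,
    tensorPow_mul]
  congr 1 with i : 1
  exact (hρ i).spectral_theorem.trans (Unitary.conjStarAlgAut_apply ..)

end Tensor

section Surprisal

theorem Kconst_pos : 0 < Kconst := by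
  have := Real.logb_pos one_lt_two (Real.one_lt_exp_iff.mpr one_pos)
  unfold Kconst
  positivity

theorem mul_logb_sq_le_Kconst_sq {q : ℝ} (hq₀ : 0 ≤ q) (hq₁ : q ≤ 1) :
    q * Real.logb 2 q ^ 2 ≤ Kconst ^ 2 := by
  rcases hq₀.eq_or_lt with rfl | hq
  · simpa using sq_nonneg Kconst
  -- With `y = -log √q`, the left side is the square of a multiple of `y * exp (-y)`,
  -- which is maximal at `y = 1`.
  set y := -Real.log q / 2 with hy
  have hy₀ : 0 ≤ y := by linarith [Real.log_nonpos hq₀ hq₁]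
  have hq_eq : q = Real.exp (-y) ^ 2 := by
    rw [← Real.exp_nat_mul, hy]
    ring_nf
    exact (Real.exp_log hq).symm
  have hlogb : Real.logb 2 q = -(2 * y) / Real.log 2 := by
    rw [Real.logb, hy]
    ring
  calc q * Real.logb 2 q ^ 2
      = (2 / Real.log 2 * (y * Real.exp (-y))) ^ 2 := by rw [hlogb, hq_eq]; ring
    _ ≤ (2 / Real.log 2 * Real.exp (-1)) ^ 2 := by
        gcongr
        exact Real.mul_exp_neg_le_exp_neg_one y
    _ = Kconst ^ 2 := by
        rw [Kconst, Real.logb, Real.log_exp, Real.exp_neg]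
        ring

variable {Ω : Type*} [MeasurableSpace Ω]

/-- The surprisal (self-information) `-log₂ μ{ω}` of an outcome under a discrete measure `μ`, the
random variable whose mean is the Shannon entropy of `μ`. It is `0` at an outcome of measure `0`,
since `Real.logb 2 0 = 0`. -/
def surprisal (μ : Measure Ω) (ω : Ω) : ℝ := -Real.logb 2 (μ.real {ω})

theorem measureReal_singleton_le_exp2_neg_surprisal (μ : Measure Ω) (ω : Ω) :
    μ.real {ω} ≤ exp2 (-surprisal μ ω) := by
  rw [exp2, surprisal, neg_neg]
  rcases (measureReal_nonneg (μ := μ) (s := {ω})).eq_or_lt with hω | hω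
  · rw [← hω]
    positivity
  · rw [Real.rpow_logb two_pos (by norm_num) hω]

variable [Fintype Ω] [MeasurableSingletonClass Ω]

theorem integral_surprisal (μ : Measure Ω) [IsFiniteMeasure μ] :
    ∫ ω, surprisal μ ω ∂μ = shannonEntropy fun ω => μ.real {ω} := by
  rw [integral_fintype .of_finite]
  simp [surprisal, shannonEntropy]

theorem variance_surprisal_le (μ : Measure Ω) [IsProbabilityMeasure μ] :
    Var[surprisal μ; μ] ≤ Fintype.card Ω * Kconst ^ 2 :=
  calc Var[surprisal μ; μ]
      ≤ ∫ ω, surprisal μ ω ^ 2 ∂μ :=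
        variance_le_expectation_sq (MemLp.of_discrete (p := 2)).aestronglyMeasurable
    _ = ∑ ω, μ.real {ω} * Real.logb 2 (μ.real {ω}) ^ 2 := by
        rw [integral_fintype .of_finite]
        simp [surprisal]
    _ ≤ ∑ _ω : Ω, Kconst ^ 2 := by
        gcongr
        exact mul_logb_sq_le_Kconst_sq measureReal_nonneg measureReal_le_one
    _ = Fintype.card Ω * Kconst ^ 2 := by simp

theorem integral_le_exp2_mul_sum_add_variance (μ : Measure Ω) [IsProbabilityMeasure μ] {b : Ω → ℝ}
    (hb : ∀ ω, b ω ∈ Set.Icc 0 1) {t : ℝ} (ht : 0 < t) :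
    ∫ ω, b ω ∂μ ≤
      exp2 (t - ∫ ω, surprisal μ ω ∂μ) * ∑ ω, b ω + Var[surprisal μ; μ] / t ^ 2 := by
  set h := ∫ ω, surprisal μ ω ∂μ
  set A : Finset Ω := {ω | t ≤ |surprisal μ ω - h|} with hA
  have chebyshev : μ.real A ≤ Var[surprisal μ; μ] / t ^ 2 := by
    refine ENNReal.toReal_le_of_le_ofReal (div_nonneg (variance_nonneg _ _) (sq_nonneg t)) ?_
    simpa [hA] using meas_ge_le_variance_div_sq (μ := μ) (X := surprisal μ) MemLp.of_discrete ht
  have typical {ω : Ω} (hω : ω ∉ A) : μ.real {ω} ≤ exp2 (t - h) := by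
    have hlt : |surprisal μ ω - h| < t := by simpa [hA] using hω
    refine (measureReal_singleton_le_exp2_neg_surprisal μ ω).trans ?_
    exact Real.rpow_le_rpow_of_exponent_le one_le_two (by linarith [(abs_lt.mp hlt).1])
  calc ∫ ω, b ω ∂μ
      = ∑ ω, μ.real {ω} * b ω := integral_fintype .of_finite
    _ ≤ ∑ ω, (exp2 (t - h) * b ω + if ω ∈ A then μ.real {ω} else 0) := by
        refine Finset.sum_le_sum fun ω _ => ?_
        split_ifs with hω
        · have hexp : 0 ≤ exp2 (t - h) := Real.rpow_nonneg zero_le_two _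
          exact (mul_le_of_le_one_right measureReal_nonneg (hb ω).2).trans
            (le_add_of_nonneg_left (mul_nonneg hexp (hb ω).1))
        · rw [add_zero]
          exact mul_le_mul_of_nonneg_right (typical hω) (hb ω).1
    _ = exp2 (t - h) * ∑ ω, b ω + μ.real A := by
        rw [Finset.sum_add_distrib, ← Finset.mul_sum, Finset.sum_ite_mem, Finset.univ_inter,
          sum_measureReal_singleton]
    _ ≤ exp2 (t - h) * ∑ ω, b ω + Var[surprisal μ; μ] / t ^ 2 := by gcongr

end Surprisal

section ProductMeasure

variable {ι : Type*} [Fintype ι] {Ω : ι → Type*} [∀ i, MeasurableSpace (Ω i)]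
  (μ : ∀ i, Measure (Ω i)) [∀ i, IsProbabilityMeasure (μ i)]

theorem measureReal_pi_singleton (ω : ∀ i, Ω i) :
    (Measure.pi μ).real {ω} = ∏ i, (μ i).real {ω i} := by
  simp [measureReal_def, ENNReal.toReal_prod]

theorem surprisal_pi_ae_eq [∀ i, Countable (Ω i)] :
    surprisal (Measure.pi μ) =ᵐ[Measure.pi μ] ∑ i, fun ω => surprisal (μ i) (ω i) := by
  refine ae_iff_of_countable.mpr fun ω hω => ?_
  have hfactor : ∀ i, (μ i).real {ω i} ≠ 0 := by
    have hprod : (Measure.pi μ).real {ω} ≠ 0 := (measureReal_ne_zero_iff).mpr hω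
    rw [measureReal_pi_singleton, Finset.prod_ne_zero_iff] at hprod
    exact fun i => hprod i (Finset.mem_univ i)
  simp only [surprisal, measureReal_pi_singleton, Finset.sum_apply, Finset.sum_neg_distrib]
  rw [Real.logb_prod _ _ fun i _ => hfactor i]

variable [∀ i, Finite (Ω i)] [∀ i, MeasurableSingletonClass (Ω i)]

theorem integral_surprisal_pi :
    ∫ ω, surprisal (Measure.pi μ) ω ∂Measure.pi μ = ∑ i, ∫ ω, surprisal (μ i) ω ∂μ i := by
  rw [integral_congr_ae (surprisal_pi_ae_eq μ)]
  simp only [Finset.sum_apply]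
  rw [integral_finsetSum _ fun i _ => .of_finite]
  refine Finset.sum_congr rfl fun i _ => ?_
  exact integral_comp_eval (μ := μ) (MemLp.of_discrete (p := 2)).aestronglyMeasurable

theorem variance_surprisal_pi :
    Var[surprisal (Measure.pi μ); Measure.pi μ] = ∑ i, Var[surprisal (μ i); μ i] := by
  rw [variance_congr (surprisal_pi_ae_eq μ), variance_sum_pi fun _ => MemLp.of_discrete]

end ProductMeasure

theorem IsProbDist.exists_measure {Ω : Type*} [Fintype Ω] [MeasurableSpace Ω]
    [MeasurableSingletonClass Ω] {P : Ω → ℝ} (hP : IsProbDist P) :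
    ∃ μ : Measure Ω, IsProbabilityMeasure μ ∧ ∀ ω, μ.real {ω} = P ω := by
  have hsum : ∑ ω, ENNReal.ofReal (P ω) = 1 := by
    rw [← ENNReal.ofReal_sum_of_nonneg fun ω _ => hP.1 ω, hP.2, ENNReal.ofReal_one]
  refine ⟨(PMF.ofFintype _ hsum).toMeasure, inferInstance, fun ω => ?_⟩
  rw [measureReal_def, PMF.toMeasure_apply_singleton _ _ (measurableSet_singleton ω),
    PMF.ofFintype_apply, ENNReal.toReal_ofReal (hP.1 ω)]

namespace IsShadow

variable {ι : Type*} [Fintype ι] [DecidableEq ι] {B : Matrix ι ι ℂ} {η : ℝ}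

theorem star_mul_mul {σ U : Matrix ι ι ℂ} (hU : U ∈ Matrix.unitaryGroup ι ℂ)
    (hB : IsShadow (U * σ * star U) B η) : IsShadow σ (star U * B * U) η := by
  obtain ⟨hB₀, hB₁, hη⟩ := hB
  refine ⟨hB₀.conjTranspose_mul_mul_same U, ?_, ?_⟩
  · have h := hB₁.conjTranspose_mul_mul_same U
    rwa [← Matrix.star_eq_conjTranspose, mul_sub, sub_mul, mul_one,
      Matrix.mem_unitaryGroup_iff'.mp hU] at h
  · rwa [mul_assoc, mul_assoc, Matrix.trace_mul_comm, mul_assoc, mul_assoc,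
      ← mul_assoc (star U)] at hη

theorem re_diag_mem_Icc {σ : Matrix ι ι ℂ} (hB : IsShadow σ B η) (j : ι) :
    (B j j).re ∈ Set.Icc 0 1 := by
  refine ⟨(Complex.le_def.mp hB.1.diag_nonneg).1, ?_⟩
  simpa using (Complex.le_def.mp (hB.2.1.diag_nonneg (i := j))).1

theorem mul_exp2_le_trace_of_diagonal [MeasurableSpace ι] [MeasurableSingletonClass ι]
    {μ : Measure ι} [IsProbabilityMeasure μ]
    (hB : IsShadow (Matrix.diagonal fun j => (μ.real {j} : ℂ)) B η) {t : ℝ} (ht : 0 < t) :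
    (η - Var[surprisal μ; μ] / t ^ 2) * exp2 ((∫ j, surprisal μ j ∂μ) - t) ≤ B.trace.re := by
  have hη : η ≤ ∫ j, (B j j).re ∂μ := by
    rw [integral_fintype .of_finite]
    simpa [Matrix.trace, Matrix.diagonal_mul] using hB.2.2
  have hbound : η - Var[surprisal μ; μ] / t ^ 2 ≤
      exp2 (t - ∫ j, surprisal μ j ∂μ) * ∑ j, (B j j).re := by
    linarith [integral_le_exp2_mul_sum_add_variance μ hB.re_diag_mem_Icc ht]
  calc _ ≤ exp2 (t - ∫ j, surprisal μ j ∂μ) * (∑ j, (B j j).re) *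
        exp2 ((∫ j, surprisal μ j ∂μ) - t) :=
        mul_le_mul_of_nonneg_right hbound (Real.rpow_nonneg zero_le_two _)
    _ = ∑ j, (B j j).re := by
        rw [mul_right_comm, exp2, exp2, ← Real.rpow_add two_pos, sub_add_sub_cancel, sub_self,
          Real.rpow_zero, one_mul]
    _ = B.trace.re := by simp [Matrix.trace]

end IsShadow

theorem IsState.nonempty {ι : Type*} [Fintype ι] [DecidableEq ι] {ρ : Matrix ι ι ℂ}
    (hρ : IsState ρ) : Nonempty ι := by
  by_contra hι
  rw [not_nonempty_iff] at hι
  simpa [Matrix.trace] using hρ.2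

theorem IsState.isProbDist_eigenvalues {ι : Type*} [Fintype ι] [DecidableEq ι] {ρ : Matrix ι ι ℂ}
    (hρ : IsState ρ) : IsProbDist hρ.1.1.eigenvalues := by
  refine ⟨hρ.1.eigenvalues_nonneg, ?_⟩
  have htrace := hρ.1.1.trace_eq_sum_eigenvalues.symm.trans hρ.2
  exact Complex.ofReal_injective (by simpa using htrace)

theorem vnEntropy_eq_shannonEntropy {d : ℕ} {ρ : Mat d} (hρ : ρ.IsHermitian) :
    vnEntropy ρ = shannonEntropy hρ.eigenvalues :=
  dif_pos hρ

theorem sum_comp_eq_of_type {X : Type*} [Fintype X] {n : ℕ} {xs : Fin n → X} {P : X → ℝ}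
    (htype : ∀ x, (countIn x xs : ℝ) = n * P x) (f : X → ℝ) :
    ∑ i, f (xs i) = n * ∑ x, P x * f x := by
  rw [← Finset.sum_fiberwise' Finset.univ xs f, Finset.mul_sum]
  refine Finset.sum_congr rfl fun x _ => ?_
  rw [Finset.sum_const, nsmul_eq_mul, ← mul_assoc, ← htype x, countIn]

theorem variance_bound_div_deviation_sq_le {a d n K δ : ℝ} (ha : 1 ≤ a) (hd : 1 ≤ d) (hn : 0 < n)
    (hK : 0 < K) (hδ : 0 < δ) :
    n * d * K ^ 2 / (K * d * √a * δ * √n) ^ 2 ≤ a * d / δ ^ 2 := by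
  have had : 1 ≤ a * d := one_le_mul_of_one_le_of_one_le ha hd
  calc n * d * K ^ 2 / (K * d * √a * δ * √n) ^ 2
      = 1 / (a * d) / δ ^ 2 := by
        simp only [mul_pow]
        rw [Real.sq_sqrt (by positivity), Real.sq_sqrt hn.le]
        field_simp
    _ ≤ a * d / δ ^ 2 := by
        gcongr
        exact (div_le_one_of_le₀ had (by positivity)).trans had

theorem shadow_bound_channel_general {d n : ℕ} {ρ : Fin n → Mat d} (hρ : ∀ i, IsState (ρ i))
    {B : MatPow d n} {η t : ℝ} (hB : IsShadow (tensorPow ρ) B η) (ht : 0 < t) :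
    (η - n * d * Kconst ^ 2 / t ^ 2) * exp2 ((∑ i, vnEntropy (ρ i)) - t) ≤ B.trace.re := by
  have hherm (i : Fin n) : (ρ i).IsHermitian := (hρ i).1.1
  choose μ hprob hμ using fun i => (hρ i).isProbDist_eigenvalues.exists_measure
  set U : MatPow d n := tensorPow fun i => ((hherm i).eigenvectorUnitary : Mat d)
  have hU : U ∈ Matrix.unitaryGroup _ ℂ :=
    tensorPow_mem_unitaryGroup fun i => (hherm i).eigenvectorUnitary.2
  have hσ : tensorPow ρ =
      U * Matrix.diagonal (fun j => ((Measure.pi μ).real {j} : ℂ)) * star U := by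
    simp only [U, tensorPow_eq_conj_diagonal hherm, measureReal_pi_singleton, hμ,
      Complex.ofReal_prod]
  have htrace : (star U * B * U).trace = B.trace := by
    rw [Matrix.trace_mul_comm, ← mul_assoc, Matrix.mem_unitaryGroup_iff.mp hU, one_mul]
  have hmean : ∫ j, surprisal (Measure.pi μ) j ∂Measure.pi μ = ∑ i, vnEntropy (ρ i) := by
    rw [integral_surprisal_pi]
    simp only [integral_surprisal, hμ, vnEntropy_eq_shannonEntropy (hherm _)]
  have hvar : Var[surprisal (Measure.pi μ); Measure.pi μ] ≤ n * d * Kconst ^ 2 := by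
    rw [variance_surprisal_pi]
    simpa [mul_assoc] using
      Finset.sum_le_card_nsmul Finset.univ _ _ fun i _ => variance_surprisal_le (μ i)
  have hbound := (IsShadow.star_mul_mul hU (hσ ▸ hB)).mul_exp2_le_trace_of_diagonal ht
  rw [hmean, htrace] at hbound
  refine le_trans ?_ hbound
  have := Real.rpow_nonneg zero_le_two ((∑ i, vnEntropy (ρ i)) - t)
  unfold exp2
  gcongr

/-- **Lemma 4, part 4 (Shadow bound for `W_{x^n}`).** For `x^n` of type `P`, every
`η`-shadow `B` of `W_{x^n}` satisfies
`Tr B ≥ (η − ad/δ²) exp₂(nH(W|P) − Kd√a δ√n)`, with `K = 2 log₂(e)/e`. -/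
theorem shadow_bound_channel {X : Type} [Fintype X] {d : ℕ}
    (W : X → Mat d) (hW : ∀ x, IsState (W x))
    (n : ℕ) (hn : 0 < n) (xs : Fin n → X) (P : X → ℝ) (hP : IsProbDist P)
    (htype : ∀ x, (countIn x xs : ℝ) = n * P x)
    (δ η : ℝ) (hδ : 0 < δ) (hη : 0 < η)
    (B : MatPow d n) (hB : IsShadow (tensorPow fun i => W (xs i)) B η) :
    (η - (Fintype.card X : ℝ) * d / δ ^ 2) *
        exp2 ((n : ℝ) * condEntropy P W -
          Kconst * d * Real.sqrt (Fintype.card X) * δ * Real.sqrt n)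
      ≤ (Matrix.trace B).re := by
  have hd : 1 ≤ d := Fin.pos_iff_nonempty.mpr (hW (xs ⟨0, hn⟩)).nonempty
  have ha : 1 ≤ Fintype.card X := Fintype.card_pos_iff.mpr ⟨xs ⟨0, hn⟩⟩
  have hK : 0 < Kconst := Kconst_pos
  have herror := variance_bound_div_deviation_sq_le (Nat.one_le_cast.mpr ha)
    (Nat.one_le_cast.mpr hd) (Nat.cast_pos.mpr hn) hK hδ
  rw [condEntropy, ← sum_comp_eq_of_type htype]
  refine le_trans (mul_le_mul_of_nonneg_right (sub_le_sub_left herror η)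
    (Real.rpow_nonneg zero_le_two _)) ?_
  exact shadow_bound_channel_general (fun i => hW (xs i)) hB (by positivity)
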